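/- Let p_i = Σ_{F ⊆ [n], |F| = i} Π_{j∈F} x_j (the i-th elementary symmetric polynomial) in S = K[x_1,...,x_n] and J = (p_1,...,p_n). Then with respect to the reverse lexicographic order, the initial ideal of J is in_<(J) = (x_1, x_2^2, ..., x_n^n). -/

import Mathlib

/-- Total degree of an exponent vector. -/
def expDeg {n : ℕ} (m : Fin n →₀ ℕ) : ℕ := m.sum fun _ e => e

/-- The (degree-)reverse lexicographic order on exponent vectors, with
`x₁ > x₂ > ⋯ > xₙ`: `u < v` iff `deg u < deg v`, or the degrees agree and at the last
index where they differ `u` has the larger exponent. -/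
def revlexLT {n : ℕ} (u v : Fin n →₀ ℕ) : Prop :=
  expDeg u < expDeg v ∨
    (expDeg u = expDeg v ∧ ∃ i : Fin n, v i < u i ∧ ∀ j : Fin n, i < j → u j = v j)

/-- The initial ideal of `J` with respect to the reverse lexicographic order: generated
by the leading monomials of the nonzero elements of `J`. -/
noncomputable def initialIdealRevlex {n : ℕ} {K : Type*} [Field K]
    (J : Ideal (MvPolynomial (Fin n) K)) : Ideal (MvPolynomial (Fin n) K) :=
  Ideal.span {q | ∃ p ∈ J, ∃ m ∈ p.support,
    (∀ m' ∈ p.support, m' ≠ m → revlexLT m' m) ∧ q = MvPolynomial.monomial m (1 : K)}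

/-!
Write `h_k(s)` for the complete homogeneous symmetric polynomial of degree `k` in the variables
`x_j`, `j ∈ s`. Comparing coefficients in
`∏_j (1 - x_j t) * ∑_k h_k(s) t^k = ∏_{j ∉ s} (1 - x_j t)` shows that `J` contains `h_k(s)` as soon
as `k` exceeds the number of variables outside `s`; in particular it contains
`h_i(x_i, …, x_n)`, whose leading monomial is `x_i ^ i`. These polynomials form a Gröbner basis
because the monomials divisible by no `x_i ^ i` are independent modulo `J`: they become a basis of
the universal splitting algebra of `T ^ n`, in whose roots all the `p_i` vanish by Vieta.
-/

open MvPolynomial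
open scoped Polynomial MonomialOrder Finset

section DegRevLex

variable {σ : Type*} [LinearOrder σ]

/-- The embedding of exponent vectors defining the degree reverse lexicographic order: degrees are
compared first, then the exponent at the last index of disagreement, in the opposite direction. -/
noncomputable def degRevLexKey : (σ →₀ ℕ) →+ ℕ ×ₗ (Colex (σ →₀ ℕ))ᵒᵈ where
  toFun u := toLex (u.degree, OrderDual.toDual (toColex u))
  map_zero' := by rw [map_zero]; rfl
  map_add' u v := by rw [map_add]; rfl

lemma degRevLexKey_monotone : Monotone (degRevLexKey (σ := σ)) := by
  intro u v huv
  rcases (Finsupp.degree_mono huv).lt_or_eq with hlt | heq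
  · exact Prod.Lex.toLex_le_toLex.2 (Or.inl hlt)
  · obtain ⟨w, rfl⟩ := exists_add_of_le huv
    rw [map_add, left_eq_add, Finsupp.degree_eq_zero_iff] at heq
    rw [heq, add_zero]

/-- The degree reverse lexicographic order, with larger variables at smaller indices. -/
noncomputable def degRevLex [Finite σ] : MonomialOrder σ where
  syn := AddMonoidHom.mrange (degRevLexKey (σ := σ))
  toSyn := AddEquiv.ofLeftInverse' degRevLexKey
    (g := fun k ↦ ofColex (OrderDual.ofDual (ofLex k).2)) fun _ ↦ rfl
  toSyn_monotone := degRevLexKey_monotone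
  -- By the Dickson lemma `σ →₀ ℕ` is well-quasi-ordered, hence so is its monotone image.
  wellFoundedLT_syn :=
    have hmono : Monotone (degRevLexKey (σ := σ)).mrangeRestrict := degRevLexKey_monotone
    have := hmono.wellQuasiOrderedLE_of_wellQuasiOrderedLE_of_surjective
      degRevLexKey.mrangeRestrict_surjective
    inferInstance

lemma degRevLex_lt_iff [Finite σ] {u v : σ →₀ ℕ} :
    u ≺[degRevLex] v ↔ u.degree < v.degree ∨
      u.degree = v.degree ∧ ∃ i, (∀ j, i < j → v j = u j) ∧ v i < u i :=
  Prod.Lex.toLex_lt_toLex (x := (u.degree, OrderDual.toDual (toColex u)))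
    (y := (v.degree, OrderDual.toDual (toColex v)))

lemma degRevLex_single_le_single_iff [Finite σ] {i j : σ} :
    Finsupp.single j 1 ≼[degRevLex] Finsupp.single i 1 ↔ i ≤ j := by
  change degRevLexKey (Finsupp.single j 1) ≤ degRevLexKey (Finsupp.single i 1) ↔ _
  refine Prod.Lex.toLex_le_toLex.trans ?_
  simp [Finsupp.Colex.single_le_iff]

lemma revlexLT_iff_degRevLex_lt {n : ℕ} {u v : Fin n →₀ ℕ} :
    revlexLT u v ↔ u ≺[degRevLex] v := by
  have hdeg (w : Fin n →₀ ℕ) : expDeg w = w.degree := rfl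
  simp only [revlexLT, degRevLex_lt_iff, hdeg, and_comm, eq_comm]

lemma initialIdealRevlex_eq_span_leadingTerm {n : ℕ} {K : Type*} [Field K]
    (J : Ideal (MvPolynomial (Fin n) K)) :
    initialIdealRevlex J =
      Ideal.span (degRevLex.leadingTerm '' (J : Set (MvPolynomial (Fin n) K))) := by
  rw [MonomialOrder.span_leadingTerm_eq_span_monomial', initialIdealRevlex]
  congr 1
  ext q
  constructor
  · rintro ⟨p, hpJ, u, hu, hmax, rfl⟩
    have hp0 : p ≠ 0 := by rintro rfl; simp at hu
    refine ⟨p, ⟨hpJ, hp0⟩, ?_⟩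
    have hdeg : degRevLex.degree p = u := by
      by_contra hne
      exact (revlexLT_iff_degRevLex_lt.1 (hmax _ (degRevLex.degree_mem_support hp0) hne)).not_ge
        (degRevLex.le_degree hu)
    simp only [hdeg]
  · rintro ⟨p, ⟨hpJ, hp0⟩, rfl⟩
    exact ⟨p, hpJ, _, degRevLex.degree_mem_support hp0, fun u hu hne ↦
      revlexLT_iff_degRevLex_lt.2 ((degRevLex.le_degree hu).lt_of_ne
        fun h ↦ hne (degRevLex.toSyn.injective h)), rfl⟩

end DegRevLex

section LeadingTerms

variable {σ ι R : Type*} [CommRing R] (m : MonomialOrder σ) {J : Ideal (MvPolynomial σ R)}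
  {g : ι → MvPolynomial σ R}

lemma exists_degree_le_degree_of_mem (hunit : ∀ i, IsUnit (m.leadingCoeff (g i)))
    (hgJ : ∀ i, g i ∈ J)
    (hstd : ∀ r ∈ J, (∀ c ∈ r.support, ∀ i, ¬ m.degree (g i) ≤ c) → r = 0)
    {p : MvPolynomial σ R} (hpJ : p ∈ J) (hp : p ≠ 0) : ∃ i, m.degree (g i) ≤ m.degree p := by
  obtain ⟨q, r, hpqr, hdeg, hr⟩ := m.div hunit p
  have hqJ : Finsupp.linearCombination _ g q ∈ J :=
    J.sum_mem fun i _ ↦ J.mul_mem_left _ (hgJ i)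
  have hr0 : r = 0 := hstd r ((J.add_mem_iff_right hqJ).1 (hpqr ▸ hpJ)) hr
  obtain ⟨i, hi⟩ : ∃ i, coeff (m.degree p) (g i * q i) ≠ 0 := by
    by_contra! h
    refine m.leadingCoeff_ne_zero_iff.2 hp ?_
    rw [MonomialOrder.leadingCoeff]
    nth_rw 2 [hpqr]
    rw [hr0, add_zero, Finsupp.linearCombination_apply, Finsupp.sum, coeff_sum]
    exact Finset.sum_eq_zero fun i _ ↦ by rw [smul_eq_mul, mul_comm, h]
  have hq0 : q i ≠ 0 := by rintro h; simp [h] at hi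
  have heq : m.degree (g i * q i) = m.degree p :=
    m.toSyn.injective ((hdeg i).antisymm (m.le_degree (mem_support_iff.2 hi)))
  refine ⟨i, ?_⟩
  rw [← heq, m.degree_mul_of_isRegular_left (hunit i).isRegular hq0]
  exact le_self_add

theorem span_leadingTerm_eq_span_range (hunit : ∀ i, IsUnit (m.leadingCoeff (g i)))
    (hgJ : ∀ i, g i ∈ J)
    (hstd : ∀ r ∈ J, (∀ c ∈ r.support, ∀ i, ¬ m.degree (g i) ≤ c) → r = 0) :
    Ideal.span (m.leadingTerm '' (J : Set (MvPolynomial σ R))) =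
      Ideal.span (Set.range fun i ↦ m.leadingTerm (g i)) := by
  apply le_antisymm <;> rw [Ideal.span_le]
  · rintro _ ⟨p, hpJ, rfl⟩
    by_cases hp : p = 0
    · simp [hp]
    obtain ⟨i, hi⟩ := exists_degree_le_degree_of_mem m hunit hgJ hstd hpJ hp
    refine Ideal.mem_of_dvd _ ?_ (Ideal.subset_span ⟨i, rfl⟩)
    exact monomial_dvd_monomial.2 ⟨Or.inr hi, (hunit i).dvd⟩
  · rintro _ ⟨i, rfl⟩
    exact Ideal.subset_span ⟨g i, hgJ i, rfl⟩

end LeadingTerms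

section GeneratingSeries

variable {ι A : Type*} [CommRing A]

lemma coeff_prod_one_sub_C_mul_X (b : ι → A) (s : Finset ι) (k : ℕ) :
    PowerSeries.coeff k (∏ j ∈ s, (1 - PowerSeries.C (b j) * PowerSeries.X)) =
      (-1) ^ k * ∑ t ∈ s.powersetCard k, ∏ j ∈ t, b j := by
  have hterm (t : Finset ι) : ∏ j ∈ t, -(PowerSeries.C (b j) * PowerSeries.X) =
      PowerSeries.C ((-1) ^ #t * ∏ j ∈ t, b j) * PowerSeries.X ^ #t := by
    rw [Finset.prod_neg, Finset.prod_mul_distrib, Finset.prod_const]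
    simp [mul_assoc]
  simp only [sub_eq_add_neg, Finset.prod_one_add, hterm, map_sum, PowerSeries.coeff_C_mul_X_pow]
  rw [← Finset.sum_filter, Finset.mul_sum, Finset.powersetCard_eq_filter]
  simp only [eq_comm (a := k)]
  exact Finset.sum_congr rfl fun t ht ↦ by rw [(Finset.mem_filter.1 ht).2]

lemma one_sub_C_mul_X_mul_mk_pow (a : A) :
    (1 - PowerSeries.C a * PowerSeries.X) * PowerSeries.mk (a ^ ·) = 1 := by
  ext (_ | k)
  · simp
  · simp [sub_mul, mul_assoc, PowerSeries.coeff_succ_X_mul, PowerSeries.coeff_one, pow_succ']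

end GeneratingSeries

section CompleteHomogeneous

variable {σ : Type*} [DecidableEq σ] (R : Type*) [CommRing R]

/-- The complete homogeneous symmetric polynomial of degree `k` in the variables indexed by `s`. -/
noncomputable def hsymmOn (s : Finset σ) (k : ℕ) : MvPolynomial σ R :=
  ∑ l ∈ s.finsuppAntidiag k, monomial l 1

lemma mk_hsymmOn (s : Finset σ) :
    PowerSeries.mk (hsymmOn R s) = ∏ j ∈ s, PowerSeries.mk ((X j : MvPolynomial σ R) ^ ·) := by
  ext1 k
  rw [PowerSeries.coeff_prod, PowerSeries.coeff_mk, hsymmOn]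
  refine Finset.sum_congr rfl fun l hl ↦ ?_
  simp only [PowerSeries.coeff_mk, monomial_eq, C_1, one_mul]
  exact Finsupp.prod_of_support_subset _ (Finset.mem_finsuppAntidiag.1 hl).2 _ (by simp)

lemma prod_one_sub_mul_mk_hsymmOn [Fintype σ] (s : Finset σ) :
    (∏ j, (1 - PowerSeries.C (X j : MvPolynomial σ R) * PowerSeries.X)) *
        PowerSeries.mk (hsymmOn R s) =
      ∏ j ∈ sᶜ, (1 - PowerSeries.C (X j) * PowerSeries.X) := by
  rw [← Finset.prod_compl_mul_prod s, mk_hsymmOn, mul_assoc, ← Finset.prod_mul_distrib]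
  simp only [one_sub_C_mul_X_mul_mk_pow, Finset.prod_const_one, mul_one]

variable {R}

theorem hsymmOn_mem_of_esymm_mem [Fintype σ] {J : Ideal (MvPolynomial σ R)}
    (hJ : ∀ k, esymm σ R (k + 1) ∈ J) {s : Finset σ} {k : ℕ} (hk : #sᶜ < k) :
    hsymmOn R s k ∈ J := by
  have hcoeff := congrArg (PowerSeries.coeff k) (prod_one_sub_mul_mk_hsymmOn R s)
  rw [PowerSeries.coeff_mul, coeff_prod_one_sub_C_mul_X, Finset.powersetCard_eq_empty.2 hk,
    Finset.sum_empty, mul_zero, Finset.Nat.sum_antidiagonal_eq_sum_range_succ_mk,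
    Finset.sum_range_succ'] at hcoeff
  simp only [coeff_prod_one_sub_C_mul_X, PowerSeries.coeff_mk, pow_zero, one_mul,
    Finset.powersetCard_zero, Finset.sum_singleton, Finset.prod_empty, tsub_zero] at hcoeff
  rw [eq_neg_of_add_eq_zero_right hcoeff]
  exact J.neg_mem (J.sum_mem fun i _ ↦ J.mul_mem_right _ (J.mul_mem_left _ (hJ i)))

lemma coeff_hsymmOn (s : Finset σ) (k : ℕ) (u : σ →₀ ℕ) :
    coeff u (hsymmOn R s k) = if u ∈ s.finsuppAntidiag k then 1 else 0 := by
  simp [hsymmOn, coeff_sum, coeff_monomial]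

lemma single_mem_finsuppAntidiag {s : Finset σ} {i : σ} (hi : i ∈ s) (k : ℕ) :
    Finsupp.single i k ∈ s.finsuppAntidiag k :=
  Finset.mem_finsuppAntidiag'.2 ⟨Finsupp.sum_single_index rfl,
    Finsupp.support_single_subset.trans (Finset.singleton_subset_iff.2 hi)⟩

variable (m : MonomialOrder σ) {s : Finset σ} {i : σ}

lemma le_single_of_mem_finsuppAntidiag
    (hmax : ∀ j ∈ s, Finsupp.single j 1 ≼[m] Finsupp.single i 1) {k : ℕ} {l : σ →₀ ℕ}
    (hl : l ∈ s.finsuppAntidiag k) : l ≼[m] Finsupp.single i k := by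
  obtain ⟨hsum, hsupp⟩ := Finset.mem_finsuppAntidiag.1 hl
  have hl_eq : l = ∑ j ∈ s, l j • Finsupp.single j 1 := by
    conv_lhs => rw [← l.sum_single, l.sum_of_support_subset hsupp _ (by simp)]
    simp
  calc m.toSyn l = ∑ j ∈ s, l j • m.toSyn (Finsupp.single j 1) := by
        conv_lhs => rw [hl_eq]
        simp only [map_sum, map_nsmul]
    _ ≤ ∑ j ∈ s, l j • m.toSyn (Finsupp.single i 1) :=
        Finset.sum_le_sum fun j hj ↦ nsmul_le_nsmul_right (hmax j hj) _
    _ = m.toSyn (Finsupp.single i k) := by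
        rw [← Finset.sum_smul, hsum, ← map_nsmul, Finsupp.smul_single_one]

lemma degree_hsymmOn [Nontrivial R] (hi : i ∈ s)
    (hmax : ∀ j ∈ s, Finsupp.single j 1 ≼[m] Finsupp.single i 1) (k : ℕ) :
    m.degree (hsymmOn R s k) = Finsupp.single i k := by
  refine m.toSyn.injective (le_antisymm (m.degree_le_iff.2 fun u hu ↦ ?_) (m.le_degree ?_))
  · refine le_single_of_mem_finsuppAntidiag m hmax (by_contra fun hu' ↦ ?_)
    exact mem_support_iff.1 hu (by rw [coeff_hsymmOn, if_neg hu'])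
  · rw [mem_support_iff, coeff_hsymmOn, if_pos (single_mem_finsuppAntidiag hi k)]
    exact one_ne_zero

lemma leadingCoeff_hsymmOn [Nontrivial R] (hi : i ∈ s)
    (hmax : ∀ j ∈ s, Finsupp.single j 1 ≼[m] Finsupp.single i 1) (k : ℕ) :
    m.leadingCoeff (hsymmOn R s k) = 1 := by
  rw [MonomialOrder.leadingCoeff, degree_hsymmOn m hi hmax, coeff_hsymmOn,
    if_pos (single_mem_finsuppAntidiag hi k)]

end CompleteHomogeneous

section SplittingAlgebra

universe u

lemma exists_map_eq_mul_X_sub_C {R A : Type*} [CommRing R] [CommRing A] [Nontrivial A] {n : ℕ}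
    {f : R[X]} (hf : f.Monic) (hn : f.natDegree = n + 1) {φ : R →+* A} {r : A}
    (hr : (f.map φ).IsRoot r) :
    ∃ q : A[X], q.Monic ∧ q.natDegree = n ∧ f.map φ = q * (Polynomial.X - Polynomial.C r) := by
  have hmul := Polynomial.mul_divByMonic_eq_iff_isRoot.2 hr
  refine ⟨f.map φ /ₘ (Polynomial.X - Polynomial.C r), ?_, ?_, by rw [mul_comm, hmul]⟩
  · refine (Polynomial.monic_X_sub_C r).of_mul_monic_left ?_
    rw [hmul]
    exact hf.map φ
  · rw [Polynomial.natDegree_divByMonic _ (Polynomial.monic_X_sub_C r), hf.natDegree_map, hn,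
      Polynomial.natDegree_X_sub_C, Nat.add_sub_cancel]

lemma exists_splittingAlgebra_basis (n : ℕ) (R : Type u) [CommRing R] [Nontrivial R]
    {f : R[X]} (hf : f.Monic) (hn : f.natDegree = n) :
    ∃ (A : Type u) (_ : CommRing A) (_ : Algebra R A) (y : Fin n → A)
      (b : Module.Basis (∀ i : Fin n, Fin (i + 1)) R A),
      f.map (algebraMap R A) = ∏ i, (Polynomial.X - Polynomial.C (y i)) ∧
      ∀ v, b v = ∏ i, y i ^ (v i : ℕ) := by
  induction n generalizing R with
  | zero =>
    refine ⟨R, inferInstance, inferInstance, Fin.elim0, .singleton _ R, ?_, fun v ↦ by simp⟩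
    rw [hf.natDegree_eq_zero.1 hn, Polynomial.map_one, Finset.univ_eq_empty, Finset.prod_empty]
  | succ n ih =>
    let pb := AdjoinRoot.powerBasis' hf
    have hdim : pb.dim = n + 1 := hn
    have : Nontrivial (AdjoinRoot f) :=
      ⟨⟨_, 0, pb.basis.ne_zero ⟨0, by rw [hdim]; exact n.succ_pos⟩⟩⟩
    obtain ⟨q, hq, hqn, hfq⟩ := exists_map_eq_mul_X_sub_C hf hn (AdjoinRoot.isRoot_root f)
    obtain ⟨A, _, _, y, b, hy, hb⟩ := ih (AdjoinRoot f) hq hqn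
    let _ : Algebra R A := Algebra.compHom A (AdjoinRoot.of f)
    have : IsScalarTower R (AdjoinRoot f) A := .of_algebraMap_eq fun _ ↦ rfl
    let e := Fin.snocEquiv fun i : Fin (n + 1) ↦ Fin (i + 1)
    let c := ((pb.basis.reindex (finCongr hdim)).smulTower b).reindex e
    refine ⟨A, inferInstance, inferInstance,
      Fin.snoc y (algebraMap (AdjoinRoot f) A (AdjoinRoot.root f)), c, ?_, fun v ↦ ?_⟩
    · have hmap := congrArg (Polynomial.map (algebraMap (AdjoinRoot f) A)) hfq
      rw [Polynomial.map_map, Polynomial.map_mul, hy] at hmap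
      rw [IsScalarTower.algebraMap_eq R (AdjoinRoot f) A, AdjoinRoot.algebraMap_eq]
      simpa [Fin.prod_univ_castSucc] using hmap
    · rw [Module.Basis.reindex_apply, Module.Basis.smulTower_apply, hb,
        Algebra.smul_def, Fin.prod_univ_castSucc, mul_comm]
      simp [e, pb, Fin.snocEquiv, Fin.init]

lemma aeval_esymm_eq_zero_of_prod_eq_X_pow {σ R A : Type*} [Fintype σ] [CommRing R] [CommRing A]
    [Algebra R A] {y : σ → A}
    (hy : ∏ i, (Polynomial.X - Polynomial.C (y i)) = Polynomial.X ^ Fintype.card σ)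
    {k : ℕ} (hk : k < Fintype.card σ) : aeval y (esymm σ R (k + 1)) = 0 := by
  have hvieta := Multiset.prod_X_sub_C_coeff (Finset.univ.val.map y)
    (k := Fintype.card σ - (k + 1)) (by simp)
  rw [Multiset.map_map] at hvieta
  change (∏ i, (Polynomial.X - Polynomial.C (y i))).coeff _ = _ at hvieta
  rw [hy, Polynomial.coeff_X_pow, if_neg (by omega), Multiset.card_map, Finset.card_val,
    Finset.card_univ, Nat.sub_sub_self hk] at hvieta
  rw [aeval_esymm_eq_multiset_esymm]
  exact ((isUnit_one.neg.pow _).mul_right_eq_zero).1 hvieta.symm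

theorem eq_zero_of_mem_span_esymm (n : ℕ) (R : Type*) [CommRing R] {p : MvPolynomial (Fin n) R}
    (hp : p ∈ Ideal.span (Set.range fun i : Fin n ↦ esymm (Fin n) R (i + 1)))
    (hstd : ∀ u ∈ p.support, ∀ i, u i ≤ i) : p = 0 := by
  nontriviality R
  obtain ⟨A, _, _, y, b, hy, hb⟩ :=
    exists_splittingAlgebra_basis n R (Polynomial.monic_X_pow n) (Polynomial.natDegree_X_pow n)
  rw [Polynomial.map_pow, Polynomial.map_X] at hy
  have hpy : aeval y p = 0 := by
    refine (Ideal.span_le (I := RingHom.ker (aeval (R := R) y))).2 ?_ hp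
    rintro _ ⟨i, rfl⟩
    exact aeval_esymm_eq_zero_of_prod_eq_X_pow (by rw [← hy, Fintype.card_fin]) (by simp)
  let w (u : p.support) (i : Fin n) : Fin (i + 1) := ⟨u.1 i, Nat.lt_succ_of_le (hstd u u.2 i)⟩
  have hw : Function.Injective w := fun u v huv ↦ Subtype.ext <| Finsupp.ext fun i ↦
    congrArg Fin.val (congrFun huv i)
  have hsum : ∑ u : p.support, coeff u.1 p • b (w u) = 0 := by
    rw [← hpy, aeval_def, eval₂_eq', ← Finset.sum_coe_sort p.support]
    simp only [hb, w, Algebra.smul_def]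
  have hcoeff := Fintype.linearIndependent_iff.1 (b.linearIndependent.comp w hw) _ hsum
  rw [← support_eq_empty, Finset.eq_empty_iff_forall_notMem]
  exact fun u hu ↦ mem_support_iff.1 hu (hcoeff ⟨u, hu⟩)

end SplittingAlgebra

lemma esymm_succ_mem_span (n : ℕ) (R : Type*) [CommRing R] (k : ℕ) :
    esymm (Fin n) R (k + 1) ∈ Ideal.span (Set.range fun i : Fin n ↦ esymm (Fin n) R (i + 1)) := by
  by_cases hk : k < n
  · exact Ideal.subset_span ⟨⟨k, hk⟩, rfl⟩
  · rw [esymm, Finset.powersetCard_eq_empty.2 (by rw [Finset.card_fin]; omega), Finset.sum_empty]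
    exact zero_mem _

theorem initialIdeal_esymm_general (n : ℕ) (R : Type*) [CommRing R] (m : MonomialOrder (Fin n))
    (hm : ∀ i j, i ≤ j → Finsupp.single j 1 ≼[m] Finsupp.single i 1) :
    Ideal.span (m.leadingTerm '' (Ideal.span (Set.range fun i : Fin n ↦
        esymm (Fin n) R (i + 1)) : Set (MvPolynomial (Fin n) R))) =
      Ideal.span (Set.range fun i : Fin n ↦ (X i : MvPolynomial (Fin n) R) ^ ((i : ℕ) + 1)) := by
  nontriviality R
  have hmax (i : Fin n) : ∀ j ∈ Finset.Ici i, Finsupp.single j 1 ≼[m] Finsupp.single i 1 :=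
    fun j hj ↦ hm i j (Finset.mem_Ici.1 hj)
  have hdeg (i : Fin n) : m.degree (hsymmOn R (Finset.Ici i) (i + 1)) = .single i (i + 1) :=
    degree_hsymmOn m (Finset.mem_Ici.2 le_rfl) (hmax i) _
  have hcoeff (i : Fin n) : m.leadingCoeff (hsymmOn R (Finset.Ici i) (i + 1)) = 1 :=
    leadingCoeff_hsymmOn m (Finset.mem_Ici.2 le_rfl) (hmax i) _
  rw [span_leadingTerm_eq_span_range m (g := fun i : Fin n ↦ hsymmOn R (Finset.Ici i) (i + 1))]
  · simp only [MonomialOrder.leadingTerm, hdeg, hcoeff, X_pow_eq_monomial]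
  · exact fun i ↦ hcoeff i ▸ isUnit_one
  · refine fun i ↦ hsymmOn_mem_of_esymm_mem (esymm_succ_mem_span n R) ?_
    simp [Finset.card_compl]
  · refine fun p hp hstd ↦ eq_zero_of_mem_span_esymm n R hp fun u hu i ↦ ?_
    have hnot := hstd u hu i
    rw [hdeg, Finsupp.single_le_iff] at hnot
    exact Nat.lt_succ_iff.1 (not_le.1 hnot)

/-- Let `p_i` be the `i`-th elementary symmetric polynomial in
`S = K[x₁,…,xₙ]` and `J = (p₁,…,pₙ)`.  With respect to the reverse lexicographic order,
`in(J) = (x₁, x₂², …, xₙⁿ)`. -/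
theorem initialIdeal_esymm (n : ℕ) (K : Type*) [Field K] :
    initialIdealRevlex (Ideal.span (Set.range fun i : Fin n =>
        MvPolynomial.esymm (Fin n) K ((i : ℕ) + 1))) =
      Ideal.span (Set.range fun i : Fin n =>
        (MvPolynomial.X i : MvPolynomial (Fin n) K) ^ ((i : ℕ) + 1)) := by
  rw [initialIdealRevlex_eq_span_leadingTerm]
  exact initialIdeal_esymm_general n K degRevLex fun _ _ ↦ degRevLex_single_le_single_iff.2
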